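/- Let n ≥ 1 and let μ : C_c^∞(ℝ^{2n}) → ℂ be a ℂ-linear functional (no continuity assumed) vanishing on all Poisson brackets, i.e. μ({f, g}) = 0 for all f, g ∈ C_c^∞(ℝ^{2n}). Then there exists a constant c ∈ ℂ such that μ(f) = c ∫_{ℝ^{2n}} f(x) d^{2n}x for all f ∈ C_c^∞(ℝ^{2n}). -/

import Mathlib

open MeasureTheory

/-- The `i`-th partial derivative of a function on `ℝᵐ` (modeled as Euclidean space). -/
noncomputable def partialDeriv {m : ℕ} (f : EuclideanSpace ℝ (Fin m) → ℂ) (i : Fin m) :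
    EuclideanSpace ℝ (Fin m) → ℂ :=
  fun x => fderiv ℝ f x (EuclideanSpace.single i 1)

/-- The standard Poisson bracket on `ℝ^{2n}`:
`{f, g} = Σ_{k<n} (∂f/∂x_k ∂g/∂x_{n+k} − ∂f/∂x_{n+k} ∂g/∂x_k)`. -/
noncomputable def poissonBracket {n : ℕ} (f g : EuclideanSpace ℝ (Fin (2 * n)) → ℂ) :
    EuclideanSpace ℝ (Fin (2 * n)) → ℂ :=
  fun x => ∑ k : Fin n,
    (partialDeriv f ⟨k.1, by have := k.isLt; omega⟩ x *
        partialDeriv g ⟨n + k.1, by have := k.isLt; omega⟩ x -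
      partialDeriv f ⟨n + k.1, by have := k.isLt; omega⟩ x *
        partialDeriv g ⟨k.1, by have := k.isLt; omega⟩ x)

/-- `C_c^∞(ℝ^{2n})`: smooth compactly supported complex-valued functions on `ℝ^{2n}`. -/
noncomputable def TestFunctions2 (n : ℕ) :
    Submodule ℂ (EuclideanSpace ℝ (Fin (2 * n)) → ℂ) where
  carrier := {f | ContDiff ℝ (⊤ : ℕ∞) f ∧ HasCompactSupport f}
  add_mem' := fun hf hg => ⟨hf.1.add hg.1, hf.2.add hg.2⟩
  zero_mem' := ⟨contDiff_const, HasCompactSupport.zero⟩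
  smul_mem' := fun c f hf => ⟨hf.1.const_smul c,
    IsCompact.of_isClosed_subset hf.2 (isClosed_tsupport _)
      (tsupport_smul_subset_right (fun _ => c) f)⟩

open Convolution

/-- abbreviation for the phase space -/
abbrev PS (n : ℕ) := EuclideanSpace ℝ (Fin (2 * n))

/-- coordinate basis vector -/
noncomputable abbrev ee {n : ℕ} (i : Fin (2 * n)) : PS n := EuclideanSpace.single i (1 : ℝ)

lemma pd_mem {n : ℕ} {f : PS n → ℂ} (hf : f ∈ TestFunctions2 n) (i : Fin (2 * n)) :
    partialDeriv f i ∈ TestFunctions2 n := by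
  have h1 : ContDiff ℝ (⊤ : ℕ∞) f := hf.1
  refine ⟨?_, hf.2.fderiv_apply ℝ _⟩
  have h2 : ContDiff ℝ (⊤ : ℕ∞) (fderiv ℝ f) := h1.fderiv_right (by simp)
  exact h2.clm_apply contDiff_const

lemma int_tf {n : ℕ} {f : PS n → ℂ} (hf : f ∈ TestFunctions2 n) : Integrable f :=
  Continuous.integrable_of_hasCompactSupport (ContDiff.continuous hf.1) hf.2

lemma integral_pd {n : ℕ} {f : PS n → ℂ} (hf : f ∈ TestFunctions2 n) (i : Fin (2 * n)) :
    ∫ x, partialDeriv f i x = 0 := by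
  have h := integral_mul_fderiv_eq_neg_fderiv_mul_of_integrable (μ := (volume : Measure (PS n)))
    (f := fun _ : PS n => (1 : ℂ)) (g := f) (v := ee i) (by simp)
    (by
      simp only [one_mul]
      exact int_tf (pd_mem hf i)) (by simpa using int_tf hf) (by simp)
    (fun x _ => (ContDiff.differentiable hf.1 (by simp)) x)
  simp only [one_mul] at h
  change ∫ x, fderiv ℝ f x (ee i) = 0
  rw [h]
  simp

lemma box_of_tf {n : ℕ} {f : PS n → ℂ} (hf : f ∈ TestFunctions2 n) :
    ∃ M : ℝ, 1 ≤ M ∧ ∀ x : PS n, ∀ j, M < |x j| → f x = 0 := by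
  obtain ⟨R, hR⟩ := (IsCompact.isBounded hf.2).subset_closedBall (0 : PS n)
  refine ⟨max R 1, le_max_right _ _, fun x j hj => ?_⟩
  by_contra h
  have h1 : x ∈ tsupport f := subset_tsupport f h
  have h2 := hR h1
  rw [mem_closedBall_zero_iff] at h2
  have h3 := PiLp.norm_apply_le x j
  rw [Real.norm_eq_abs] at h3
  have := le_max_left R 1
  linarith

lemma tf_of_box {n : ℕ} {f : PS n → ℂ} (hf : ContDiff ℝ (⊤ : ℕ∞) f)
    (h : ∃ M : ℝ, ∀ x : PS n, ∀ j, M < |x j| → f x = 0) : f ∈ TestFunctions2 n := by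
  obtain ⟨M, hM⟩ := h
  refine ⟨hf, ?_⟩
  let K : Set (Fin (2 * n) → ℝ) := Set.univ.pi fun _ => Set.Icc (-M) M
  have hK : IsCompact K := isCompact_univ_pi fun _ => isCompact_Icc
  let e := (EuclideanSpace.equiv (Fin (2 * n)) ℝ).toHomeomorph
  refine HasCompactSupport.intro (e.isCompact_preimage.2 hK) fun x hx => ?_
  have : ∃ j, ¬ (x j ∈ Set.Icc (-M) M) := by
    by_contra hc
    push Not at hc
    exact hx fun j _ => hc j
  obtain ⟨j, hj⟩ := this
  apply hM x j
  by_contra hc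
  exact hj (abs_le.1 (not_lt.1 hc))

/-- partial convolution along a coordinate direction -/
noncomputable def lineConv {n : ℕ} (ν : Measure ℝ) (i : Fin (2 * n)) (f : PS n → ℂ) : PS n → ℂ :=
  fun x => ∫ t, f (x - t • ee i) ∂ν

lemma line_closedEmb {n : ℕ} (i : Fin (2 * n)) :
    Topology.IsClosedEmbedding (fun t : ℝ => t • ee i) := by
  apply isClosedEmbedding_smul_left
  simp

lemma lineConv_contDiff {n : ℕ} (ν : Measure ℝ) [IsLocallyFiniteMeasure ν] (i : Fin (2 * n))
    {f : PS n → ℂ} (hf : f ∈ TestFunctions2 n) : ContDiff ℝ (⊤ : ℕ∞) (lineConv ν i f) := by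
  let m : Measure (PS n) := Measure.map (fun t : ℝ => t • ee i) ν
  have hemb := (line_closedEmb i).measurableEmbedding
  have : IsFiniteMeasureOnCompacts m := ⟨fun K hK => by
    change Measure.map _ ν K < _
    rw [hemb.map_apply]
    exact ((line_closedEmb i).isCompact_preimage hK).measure_lt_top⟩
  have hm : IsLocallyFiniteMeasure m := isLocallyFiniteMeasure_of_isFiniteMeasureOnCompacts
  have key : lineConv ν i f
      = (fun _ : PS n => (1 : ℝ)) ⋆[ContinuousLinearMap.lsmul ℝ ℝ, m] f := by
    funext x
    rw [convolution_def, hemb.integral_map]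
    simp [lineConv]
  rw [key]
  exact HasCompactSupport.contDiff_convolution_right _ hf.2 (locallyIntegrable_const _) hf.1

lemma coord_line {n : ℕ} (i j : Fin (2 * n)) (x : PS n) (t : ℝ) :
    (x - t • ee i) j = x j - if j = i then t else 0 := by
  simp [ee]

lemma slice_integrable {n : ℕ} (i : Fin (2 * n)) {f : PS n → ℂ} (hf : f ∈ TestFunctions2 n)
    (x : PS n) : Continuous (fun u : ℝ => f (x + u • ee i)) ∧
      Integrable (fun u : ℝ => f (x + u • ee i)) := by
  have hc : Continuous (fun u : ℝ => f (x + u • ee i)) := by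
    have : Continuous f := ContDiff.continuous hf.1
    fun_prop
  refine ⟨hc, hc.integrable_of_hasCompactSupport ?_⟩
  have h := (Topology.IsClosedEmbedding.comp (Homeomorph.addLeft x).isClosedEmbedding
    (line_closedEmb i))
  exact HasCompactSupport.comp_isClosedEmbedding hf.2 h

lemma lineConv_Ioi_deriv {n : ℕ} (i : Fin (2 * n)) {f : PS n → ℂ} (hf : f ∈ TestFunctions2 n)
    (x : PS n) :
    HasDerivAt (fun s : ℝ => lineConv (volume.restrict (Set.Ioi 0)) i f (x + s • ee i)) (f x) 0 := by
  obtain ⟨hc, hi⟩ := slice_integrable i hf x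
  set φ := fun u : ℝ => f (x + u • ee i) with hφ
  have h1 : (fun s : ℝ => lineConv (volume.restrict (Set.Ioi 0)) i f (x + s • ee i)) =
      fun s => (∫ u in Set.Iic 0, φ u) + ∫ u in (0 : ℝ)..s, φ u := by
    funext s
    have h2 : lineConv (volume.restrict (Set.Ioi 0)) i f (x + s • ee i)
        = ∫ u in Set.Iic s, φ u := by
      rw [lineConv, integral_Iic_eq_integral_Iio, ← integral_indicator measurableSet_Ioi,
        ← integral_indicator measurableSet_Iio, ← integral_sub_left_eq_self _ volume s]
      congr 1
      funext t
      simp only [Set.indicator, Set.mem_Ioi, Set.mem_Iio, hφ]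
      by_cases ht : t < s
      · rw [if_pos ht, if_pos (by linarith)]
        congr 1
        module
      · rw [if_neg ht, if_neg (by linarith)]
    rw [h2, ← intervalIntegral.integral_Iic_sub_Iic hi.integrableOn hi.integrableOn]
    ring
  rw [h1]
  have h3 := (intervalIntegral.integral_hasDerivAt_right (hc.intervalIntegrable 0 0)
    (hc.stronglyMeasurableAtFilter _ _) hc.continuousAt).const_add (∫ u in Set.Iic 0, φ u)
  simpa [hφ] using h3

lemma lineConv_invariant {n : ℕ} (i : Fin (2 * n)) (f : PS n → ℂ) (x : PS n) (s : ℝ) :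
    lineConv volume i f (x + s • ee i) = lineConv volume i f x := by
  unfold lineConv
  rw [← integral_sub_right_eq_self (fun t => f (x - t • ee i)) s]
  congr 1
  funext t
  congr 1
  module

/-- the smooth step function, complex valued -/
noncomputable def stp (t : ℝ) : ℂ := (Real.smoothTransition t : ℂ)

lemma stp_contDiff : ContDiff ℝ (⊤ : ℕ∞) stp :=
  Complex.ofRealCLM.contDiff.comp Real.smoothTransition.contDiff

/-- its derivative -/
noncomputable def rho : ℝ → ℂ := deriv stp

lemma rho_contDiff : ContDiff ℝ (⊤ : ℕ∞) rho :=
  ((contDiff_infty_iff_deriv (𝕜 := ℝ) (f := stp)).1 stp_contDiff).2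

lemma rho_zero {t : ℝ} (ht : 1 < |t|) : rho t = 0 := by
  rcases lt_abs.1 ht with h | h
  · have : stp =ᶠ[nhds t] fun _ => 1 := by
      filter_upwards [lt_mem_nhds h] with s hs
      simp [stp, Real.smoothTransition.one_of_one_le hs.le]
    rw [rho, this.deriv_eq]; simp
  · have h' : t < 0 := by linarith
    have : stp =ᶠ[nhds t] fun _ => 0 := by
      filter_upwards [gt_mem_nhds h'] with s hs
      simp [stp, Real.smoothTransition.zero_of_nonpos (le_of_lt hs)]
    rw [rho, this.deriv_eq]; simp

lemma rho_ne : ∃ a, rho a ≠ 0 := by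
  by_contra hc
  push Not at hc
  have := is_const_of_deriv_eq_zero (stp_contDiff.differentiable (by simp)) hc 0 1
  simp [stp] at this

/-- the averaging operator -/
noncomputable def avg {n : ℕ} (i : Fin (2 * n)) (f : PS n → ℂ) : PS n → ℂ :=
  fun x => rho (x i) * lineConv volume i f x

/-- the primitive -/
noncomputable def prim {n : ℕ} (i : Fin (2 * n)) (f : PS n → ℂ) : PS n → ℂ :=
  fun x => lineConv (volume.restrict (Set.Ioi 0)) i f x - stp (x i) * lineConv volume i f x

lemma coord_contDiff {n : ℕ} (i : Fin (2 * n)) : ContDiff ℝ (⊤ : ℕ∞) (fun x : PS n => x i) :=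
  (EuclideanSpace.proj i : PS n →L[ℝ] ℝ).contDiff

lemma lineConv_zero {n : ℕ} (ν : Measure ℝ) {i j : Fin (2 * n)} (hij : j ≠ i) {f : PS n → ℂ}
    {M : ℝ} (hM : ∀ x : PS n, ∀ j, M < |x j| → f x = 0) {x : PS n} (hx : M < |x j|) :
    lineConv ν i f x = 0 := by
  unfold lineConv
  have : ∀ t : ℝ, f (x - t • ee i) = 0 := fun t => hM _ j (by rw [coord_line]; simpa [hij] using hx)
  simp [this]

lemma avg_mem {n : ℕ} (i : Fin (2 * n)) {f : PS n → ℂ} (hf : f ∈ TestFunctions2 n) :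
    avg i f ∈ TestFunctions2 n := by
  apply tf_of_box
  · exact (rho_contDiff.comp (coord_contDiff i)).mul (lineConv_contDiff _ i hf)
  · obtain ⟨M, h1, hM⟩ := box_of_tf hf
    refine ⟨M, fun x j hj => ?_⟩
    by_cases hij : j = i
    · subst hij
      simp [avg, rho_zero (lt_of_le_of_lt h1 hj)]
    · simp [avg, lineConv_zero volume hij hM hj]

lemma prim_mem {n : ℕ} (i : Fin (2 * n)) {f : PS n → ℂ} (hf : f ∈ TestFunctions2 n) :
    prim i f ∈ TestFunctions2 n := by
  apply tf_of_box
  · exact (lineConv_contDiff _ i hf).sub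
      ((stp_contDiff.comp (coord_contDiff i)).mul (lineConv_contDiff _ i hf))
  · obtain ⟨M, h1, hM⟩ := box_of_tf hf
    refine ⟨M, fun x j hj => ?_⟩
    by_cases hij : j = i
    · subst hij
      rcases lt_abs.1 hj with h | h
      · have e1 : stp (x j) = 1 := by
          simp [stp, Real.smoothTransition.one_of_one_le (h1.trans h.le)]
        simp only [prim, e1, lineConv, one_mul]
        rw [setIntegral_eq_integral_of_forall_compl_eq_zero, sub_self]
        intro t ht
        apply hM _ j
        rw [coord_line, if_pos rfl]
        simp only [Set.mem_Ioi, not_lt] at ht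
        exact lt_abs.2 (Or.inl (by linarith))
      · have e1 : stp (x j) = 0 := by
          simp [stp, Real.smoothTransition.zero_of_nonpos (show x j ≤ 0 by linarith)]
        simp only [prim, e1, lineConv, zero_mul, sub_zero]
        apply setIntegral_eq_zero_of_forall_eq_zero
        intro t ht
        apply hM _ j
        rw [coord_line, if_pos rfl]
        simp only [Set.mem_Ioi] at ht
        exact lt_abs.2 (Or.inr (by linarith))
    · simp [prim, lineConv_zero _ hij hM hj]

lemma pd_prim {n : ℕ} (i : Fin (2 * n)) {f : PS n → ℂ} (hf : f ∈ TestFunctions2 n) :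
    partialDeriv (prim i f) i = f - avg i f := by
  funext x
  have hd : DifferentiableAt ℝ (prim i f) x :=
    (ContDiff.differentiable (prim_mem i hf).1 (by simp)) x
  have hl := hd.hasFDerivAt.hasLineDerivAt (ee i)
  unfold HasLineDerivAt at hl
  refine hl.unique ?_
  have hst : HasDerivAt (fun t : ℝ => stp (x i + t)) (rho (x i)) 0 := by
    have : HasDerivAt stp (rho (x i)) (x i + 0) := by
      rw [add_zero]
      exact (stp_contDiff.differentiable (by simp) (x i)).hasDerivAt
    exact this.comp_const_add (x i) 0
  have h := (lineConv_Ioi_deriv i hf x).sub (hst.mul_const (lineConv volume i f x))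
  have hfun : (fun t : ℝ => prim i f (x + t • ee i)) =
      ((fun s => lineConv (volume.restrict (Set.Ioi 0)) i f (x + s • ee i)) - fun y =>
        stp (x i + y) * lineConv volume i f x) := by
    funext t
    simp [prim, lineConv_invariant]
  rw [hfun]
  exact h

/-- `f` is a product in the directions of `S` -/
def Prd {n : ℕ} (S : Finset (Fin (2 * n))) (f : PS n → ℂ) : Prop :=
  ∀ i ∈ S, ∀ (x : PS n) (t : ℝ), f (x + t • ee i) * rho (x i) = f x * rho (x i + t)

lemma prd_avg {n : ℕ} {S : Finset (Fin (2 * n))} {f : PS n → ℂ} (hf : Prd S f)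
    (j : Fin (2 * n)) : Prd (insert j S) (avg j f) := by
  intro i hi x t
  by_cases hij : i = j
  · subst hij
    simp only [avg, lineConv_invariant]
    have : (x + t • ee i) i = x i + t := by simp
    rw [this]
    ring
  · have hiS : i ∈ S := (Finset.mem_insert.1 hi).resolve_left hij
    have h1 : (x + t • ee i) j = x j := by simp [Ne.symm hij]
    have h2 : lineConv volume j f (x + t • ee i) * rho (x i)
        = lineConv volume j f x * rho (x i + t) := by
      unfold lineConv
      rw [← integral_mul_const, ← integral_mul_const]
      congr 1
      funext s
      have h3 := hf i hiS (x - s • ee j) t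
      rw [coord_line, if_neg hij, sub_zero] at h3
      rw [← h3]
      congr 2
      module
    simp only [avg]
    rw [h1, mul_assoc, h2, mul_assoc]

lemma reduce {n : ℕ} (f : TestFunctions2 n) (S : Finset (Fin (2 * n))) :
    ∃ g : TestFunctions2 n, Prd S (g : PS n → ℂ) ∧
      ∀ l : TestFunctions2 n →ₗ[ℂ] ℂ,
        (∀ (h : TestFunctions2 n) (i : Fin (2 * n)), l ⟨partialDeriv h i, pd_mem h.2 i⟩ = 0) →
        l f = l g := by
  classical
  induction S using Finset.induction_on with
  | empty => exact ⟨f, by simp [Prd], fun _ _ => rfl⟩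
  | insert j S _ ih =>
    obtain ⟨g, hg, hl⟩ := ih
    refine ⟨⟨avg j g, avg_mem j g.2⟩, prd_avg hg j, fun l h => ?_⟩
    rw [hl l h, ← sub_eq_zero, ← map_sub, ← h ⟨prim j g, prim_mem j g.2⟩ j]
    congr 1
    apply Subtype.ext
    exact (pd_prim j g.2).symm

lemma prd_zero {n : ℕ} {f : PS n → ℂ} (hf : Prd Finset.univ f) {a : ℝ} (ha : rho a ≠ 0)
    (h0 : f (WithLp.toLp 2 fun _ => a) = 0) : f = 0 := by
  classical
  have key : ∀ S : Finset (Fin (2 * n)), ∀ x : PS n, (∀ i ∉ S, x i = a) → f x = 0 := by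
    intro S
    induction S using Finset.induction_on with
    | empty =>
      intro x hx
      have : x = WithLp.toLp 2 fun _ => a := by
        ext i
        simp [hx i (by simp)]
      rw [this, h0]
    | insert j S hj ih =>
      intro x hx
      have h1 := hf j (Finset.mem_univ _) (x + (a - x j) • ee j) (x j - a)
      have h2 : f (x + (a - x j) • ee j) = 0 := by
        apply ih
        intro i hi
        by_cases hij : i = j
        · subst hij; simp
        · simp [hij, hx i (by simp [hij, hi])]
      have h3 : x + (a - x j) • ee j + (x j - a) • ee j = x := by module
      have h4 : (x + (a - x j) • ee j) j = a := by simp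
      rw [h2, h3, h4, zero_mul] at h1
      exact (mul_eq_zero.1 h1).resolve_right ha
  funext x
  exact key Finset.univ x (by simp)

lemma exists_coord {n : ℕ} (h : TestFunctions2 n) (j : Fin (2 * n)) :
    ∃ g : TestFunctions2 n, ∀ x ∈ tsupport (h : PS n → ℂ), ∀ i,
      partialDeriv (g : PS n → ℂ) i x = if i = j then 1 else 0 := by
  obtain ⟨R, hR⟩ := (IsCompact.isBounded h.2.2).subset_ball (0 : PS n)
  let b : ContDiffBump (0 : PS n) := ⟨max R 1, max R 1 + 1, by positivity, by linarith⟩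
  have hb : ContDiff ℝ (⊤ : ℕ∞) (fun x : PS n => ((b x * x j : ℝ) : ℂ)) :=
    Complex.ofRealCLM.contDiff.comp (b.contDiff.mul (coord_contDiff j))
  refine ⟨⟨fun x : PS n => ((b x * x j : ℝ) : ℂ), hb, ?_⟩, ?_⟩
  · refine HasCompactSupport.intro b.hasCompactSupport fun x hx => ?_
    simp [image_eq_zero_of_notMem_tsupport hx]
  · intro x hx i
    have hxb : x ∈ Metric.ball (0 : PS n) b.rIn :=
      Metric.ball_subset_ball (le_max_left _ _) (hR hx)
    have he := b.eventuallyEq_one_of_mem_ball hxb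
    let L : PS n →L[ℝ] ℂ := Complex.ofRealCLM.comp (EuclideanSpace.proj j : PS n →L[ℝ] ℝ)
    have he' : (fun x : PS n => ((b x * x j : ℝ) : ℂ)) =ᶠ[nhds x] L := by
      filter_upwards [he] with y hy
      simp [hy, L]
    change fderiv ℝ (fun x : PS n => ((b x * x j : ℝ) : ℂ)) x (ee i) = _
    rw [he'.fderiv_eq, L.fderiv]
    by_cases hij : i = j
    · subst hij; simp [L]
    · simp [L, hij, Ne.symm hij]

lemma pd_eq_zero {n : ℕ} {f : PS n → ℂ} {x : PS n} (hx : x ∉ tsupport f) (i : Fin (2 * n)) :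
    partialDeriv f i x = 0 := by
  unfold partialDeriv
  rw [image_eq_zero_of_notMem_tsupport (fun hh => hx (tsupport_fderiv_subset ℝ hh))]
  simp

lemma vanish {n : ℕ} (μ : TestFunctions2 n →ₗ[ℂ] ℂ)
    (hμ : ∀ (f g h : TestFunctions2 n),
      (h : EuclideanSpace ℝ (Fin (2 * n)) → ℂ) =
        poissonBracket (f : EuclideanSpace ℝ (Fin (2 * n)) → ℂ)
          (g : EuclideanSpace ℝ (Fin (2 * n)) → ℂ) →
      μ h = 0) (h : TestFunctions2 n) (i : Fin (2 * n)) :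
    μ ⟨partialDeriv h i, pd_mem h.2 i⟩ = 0 := by
  by_cases hi : i.1 < n
  · obtain ⟨g, hg⟩ := exists_coord h ⟨n + i.1, by omega⟩
    apply hμ h g
    funext x
    by_cases hx : x ∈ tsupport (h : PS n → ℂ)
    · simp only [poissonBracket, hg x hx]
      rw [Finset.sum_eq_single ⟨i.1, hi⟩]
      · have : n ≠ 0 := by omega
        simp [Fin.ext_iff, this]
      · intro k _ hk
        have h1 : ¬ (k.1 = i.1) := fun hh => hk (Fin.ext hh)
        have h2 : ¬ (k.1 = n + i.1) := by omega
        simp [Fin.ext_iff, h1, h2]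
      · simp
    · simp [poissonBracket, pd_eq_zero hx]
  · obtain ⟨g, hg⟩ := exists_coord h ⟨i.1 - n, by omega⟩
    have key : μ (-⟨partialDeriv h i, pd_mem h.2 i⟩) = 0 := by
      apply hμ h g
      funext x
      change -(partialDeriv (h : PS n → ℂ) i x) = _
      by_cases hx : x ∈ tsupport (h : PS n → ℂ)
      · simp only [poissonBracket, hg x hx]
        rw [Finset.sum_eq_single ⟨i.1 - n, by omega⟩]
        · have h1 : ¬ (i.1 = i.1 - n) := by omega
          have h2 : (⟨n + (i.1 - n), by omega⟩ : Fin (2 * n)) = i := Fin.ext (by simp; omega)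
          simp only [Fin.ext_iff, h2, if_true]
          simp [h1]
        · intro k _ hk
          have h1 : ¬ (k.1 = i.1 - n) := fun hh => hk (Fin.ext hh)
          have h2 : ¬ (n + k.1 = i.1 - n) := by omega
          simp [Fin.ext_iff, h1, h2]
        · simp
      · simp [poissonBracket, pd_eq_zero hx]
    rwa [map_neg, neg_eq_zero] at key

/-- the integral as a linear functional -/
noncomputable def intL (n : ℕ) : TestFunctions2 n →ₗ[ℂ] ℂ where
  toFun f := ∫ x, (f : PS n → ℂ) x
  map_add' f g := integral_add (int_tf f.2) (int_tf g.2)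
  map_smul' c f := integral_const_mul c _

lemma exists_int_ne (n : ℕ) : ∃ f : TestFunctions2 n, intL n f ≠ 0 := by
  let b : ContDiffBump (0 : PS n) := ⟨1, 2, by norm_num, by norm_num⟩
  refine ⟨⟨fun x => ((b x : ℝ) : ℂ), Complex.ofRealCLM.contDiff.comp b.contDiff, ?_⟩, ?_⟩
  · refine HasCompactSupport.intro b.hasCompactSupport fun x hx => ?_
    simp [image_eq_zero_of_notMem_tsupport hx]
  · change ∫ x, ((b x : ℝ) : ℂ) ≠ 0
    rw [integral_complex_ofReal]
    exact_mod_cast (b.integral_pos (μ := volume)).ne'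

/-- A `ℂ`-linear functional on `C_c^∞(ℝ^{2n})` (no continuity assumed)
vanishing on all Poisson brackets is a constant multiple of the Lebesgue integral. -/
theorem functional_vanishing_on_poisson_brackets_is_multiple_of_integral
    (n : ℕ) (hn : 1 ≤ n)
    (μ : TestFunctions2 n →ₗ[ℂ] ℂ)
    (hμ : ∀ (f g h : TestFunctions2 n),
      (h : EuclideanSpace ℝ (Fin (2 * n)) → ℂ) =
        poissonBracket (f : EuclideanSpace ℝ (Fin (2 * n)) → ℂ)
          (g : EuclideanSpace ℝ (Fin (2 * n)) → ℂ) →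
      μ h = 0) :
    ∃ c : ℂ, ∀ f : TestFunctions2 n,
      μ f = c * ∫ x, (f : EuclideanSpace ℝ (Fin (2 * n)) → ℂ) x := by
  classical
  obtain ⟨a, ha⟩ := rho_ne
  obtain ⟨f0, hf0⟩ := exists_int_ne n
  obtain ⟨p, hp, hpl⟩ := reduce f0 Finset.univ
  have hμv := vanish μ hμ
  have hIv : ∀ (h : TestFunctions2 n) (i : Fin (2 * n)),
      intL n ⟨partialDeriv h i, pd_mem h.2 i⟩ = 0 := fun h i => integral_pd h.2 i
  have hIp : intL n p ≠ 0 := by rwa [← hpl _ hIv]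
  let x0 : PS n := WithLp.toLp 2 fun _ => a
  have hp0 : (p : PS n → ℂ) x0 ≠ 0 := by
    intro h0
    apply hIp
    have : p = 0 := Subtype.ext (prd_zero hp ha h0)
    rw [this, map_zero]
  refine ⟨μ p / intL n p, fun f => ?_⟩
  obtain ⟨g, hg, hgl⟩ := reduce f Finset.univ
  change μ f = _ * intL n f
  rw [hgl _ hμv, hgl _ hIv]
  have hz : (p : PS n → ℂ) x0 • g = (g : PS n → ℂ) x0 • p := by
    rw [← sub_eq_zero]
    apply Subtype.ext
    refine prd_zero (a := a) ?_ ha ?_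
    · intro i hi x t
      have h1 := hp i hi x t
      have h2 := hg i hi x t
      change ((p : PS n → ℂ) x0 * (g : PS n → ℂ) _ - (g : PS n → ℂ) x0 * (p : PS n → ℂ) _) * _
        = ((p : PS n → ℂ) x0 * (g : PS n → ℂ) _ - (g : PS n → ℂ) x0 * (p : PS n → ℂ) _) * _
      linear_combination (p : PS n → ℂ) x0 * h2 - (g : PS n → ℂ) x0 * h1
    · change (p : PS n → ℂ) x0 * (g : PS n → ℂ) x0 - (g : PS n → ℂ) x0 * (p : PS n → ℂ) x0 = 0
      ring
  have e1 := congrArg μ hz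
  have e2 := congrArg (intL n) hz
  simp only [map_smul, smul_eq_mul] at e1 e2
  have : (p : PS n → ℂ) x0 * (μ g * intL n p) = (p : PS n → ℂ) x0 * (μ p * intL n g) := by
    linear_combination intL n p * e1 - μ p * e2
  have := mul_left_cancel₀ hp0 this
  field_simp
  exact this
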